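/- ψ(−5/8) = −γ + 8/5 − (√2 − 1)·(π/2) − 4·ln 2 + √2·ln(1 + √2), where ψ is the digamma function and γ is the Euler–Mascheroni constant. -/

import Mathlib

noncomputable def digamma (x : ℝ) : ℝ := deriv Real.Gamma x / Real.Gamma x

/-!
The logarithmic derivative of Legendre's duplication formula gives the sum `ψ x + ψ (x + 1 / 2)`.
The difference is an elementary integral: `F x = ψ (x + 1 / 2) - ψ x` is nonnegative and
`F x + F (x + 1 / 2) = ψ (x + 1) - ψ x = 1 / x`, and these two properties characterize
`F x = 2 * c * ∫ u in 0..1, u ^ (2 * c * x - 1) / (1 + u ^ c)`. Sum and difference at `x = 1 / 4`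
and `x = 3 / 8` lead from `ψ (1 / 2)` to `ψ (3 / 4)` and then to `ψ (3 / 8)`, at the cost of the
integrals of `1 / (1 + u ^ 2)` and `u ^ 2 / (1 + u ^ 4)`; one step of the recurrence reaches
`-5 / 8`.
-/

open Filter MeasureTheory Real Set Topology

theorem ne_neg_natCast_of_pos {x : ℝ} (hx : 0 < x) (m : ℕ) : x ≠ -m := by
  linarith [m.cast_nonneg (α := ℝ)]

theorem digamma_one : digamma 1 = -eulerMascheroniConstant := by
  rw [digamma, hasDerivAt_Gamma_one.deriv, Gamma_one, div_one]

theorem digamma_add_one {x : ℝ} (hx : ∀ m : ℕ, x ≠ -m) :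
    digamma (x + 1) = digamma x + 1 / x := by
  have hx0 : x ≠ 0 := by simpa using hx 0
  have recurrence : (fun y ↦ Gamma (y + 1)) =ᶠ[𝓝 x] fun y ↦ y * Gamma y := by
    filter_upwards [eventually_ne_nhds hx0] with y hy using Gamma_add_one hy
  calc digamma (x + 1) = logDeriv (fun y ↦ Gamma (y + 1)) x := by
        rw [logDeriv_apply, deriv_comp_add_const, digamma]
    _ = logDeriv (fun y ↦ y * Gamma y) x := (logDeriv_congr_nhds recurrence).eq_of_nhds
    _ = 1 / x + digamma x := by
        rw [logDeriv_mul (f := fun y ↦ y) x hx0 (Gamma_ne_zero hx) differentiableAt_fun_id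
            (differentiableAt_Gamma hx), logDeriv_id', logDeriv_apply, digamma]
    _ = digamma x + 1 / x := add_comm _ _

theorem digamma_add_digamma_add_half {x : ℝ} (hx : ∀ m : ℕ, 2 * x ≠ -m) :
    digamma x + digamma (x + 1 / 2) = 2 * digamma (2 * x) - 2 * log 2 := by
  have hx₀ (m : ℕ) : x ≠ -m := fun h ↦ hx (2 * m) (by push_cast; linarith)
  have hx₁ (m : ℕ) : x + 1 / 2 ≠ -m := fun h ↦ hx (2 * m + 1) (by push_cast; linarith)
  have hshift : DifferentiableAt ℝ (fun y ↦ Gamma (y + 1 / 2)) x :=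
    (differentiableAt_Gamma hx₁).fun_comp' x (by fun_prop)
  have hdouble : DifferentiableAt ℝ (fun y ↦ Gamma (2 * y)) x :=
    (differentiableAt_Gamma hx).fun_comp' x (by fun_prop)
  have hpow : HasDerivAt (fun y : ℝ ↦ (2 : ℝ) ^ (1 - 2 * y))
      (log 2 * -(2 * 1) * 2 ^ (1 - 2 * x)) x :=
    (((hasDerivAt_id' x).const_mul 2).const_sub 1).const_rpow two_pos
  have logDeriv_left : logDeriv (fun y ↦ Gamma y * Gamma (y + 1 / 2)) x =
      digamma x + digamma (x + 1 / 2) := by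
    rw [logDeriv_mul x (Gamma_ne_zero hx₀) (g := fun y ↦ Gamma (y + 1 / 2)) (Gamma_ne_zero hx₁)
      (differentiableAt_Gamma hx₀) hshift, logDeriv_apply, logDeriv_apply, deriv_comp_add_const,
      digamma, digamma]
  have logDeriv_right : logDeriv (fun y ↦ Gamma (2 * y) * 2 ^ (1 - 2 * y) * √π) x =
      2 * digamma (2 * x) - 2 * log 2 := by
    rw [logDeriv_mul_const x _ (by positivity), logDeriv_mul (f := fun y ↦ Gamma (2 * y)) x
      (Gamma_ne_zero hx) (by positivity) hdouble hpow.differentiableAt, logDeriv_apply,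
      logDeriv_apply, hpow.deriv, deriv_comp_mul_left, smul_eq_mul, digamma]
    field_simp
    ring
  rw [← logDeriv_left, ← logDeriv_right, funext Gamma_mul_Gamma_add_half]

theorem digamma_one_half : digamma (1 / 2) = -eulerMascheroniConstant - 2 * log 2 := by
  have sum : digamma (1 / 2) + digamma 1 = 2 * digamma 1 - 2 * log 2 := by
    convert digamma_add_digamma_add_half (x := 1 / 2) (ne_neg_natCast_of_pos (by norm_num)) using 4
      <;> norm_num
  linarith [digamma_one]

theorem monotoneOn_digamma : MonotoneOn digamma (Ioi 0) := by
  have hdiff (x : ℝ) (hx : x ∈ Ioi 0) : DifferentiableAt ℝ Gamma x :=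
    differentiableAt_Gamma (ne_neg_natCast_of_pos hx)
  refine (convexOn_log_Gamma.monotoneOn_deriv fun x hx ↦
    (hdiff x hx).log (Gamma_pos_of_pos hx).ne').congr fun x hx ↦ ?_
  rw [Function.comp_def, deriv.log (hdiff x hx) (Gamma_pos_of_pos hx).ne', digamma]

-- `|f - g|` has period `h` and is bounded by `φ`, which vanishes at infinity.
theorem eqOn_Ioi_of_add_shift_eq {f g φ : ℝ → ℝ} {h : ℝ} (hh : 0 < h)
    (hφ : Tendsto φ atTop (𝓝 0)) (hf₀ : ∀ x > 0, 0 ≤ f x) (hg₀ : ∀ x > 0, 0 ≤ g x)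
    (hf : ∀ x > 0, f x + f (x + h) = φ x) (hg : ∀ x > 0, g x + g (x + h) = φ x) :
    EqOn f g (Ioi 0) := by
  intro x (hx : 0 < x)
  have hpos (n : ℕ) : 0 < x + n * h := by positivity
  have abs_sub_le (y : ℝ) (hy : 0 < y) : |f y - g y| ≤ φ y := by
    rw [abs_le]
    constructor <;>
      linarith [hf y hy, hg y hy, hf₀ y hy, hg₀ y hy, hf₀ (y + h) (by positivity),
        hg₀ (y + h) (by positivity)]
  have abs_sub_shift (n : ℕ) : |f (x + n * h) - g (x + n * h)| = |f x - g x| := by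
    induction n with
    | zero => simp
    | succ n ih =>
      rw [← ih, ← abs_neg, Nat.cast_succ, add_one_mul, ← add_assoc]
      congr 1
      linarith [hf _ (hpos n), hg _ (hpos n)]
  have tendsto_shift : Tendsto (fun n : ℕ ↦ x + n * h) atTop atTop :=
    tendsto_atTop_add_const_left _ _ (tendsto_natCast_atTop_atTop.atTop_mul_const hh)
  have abs_sub_nonpos : |f x - g x| ≤ 0 :=
    ge_of_tendsto' (hφ.comp tendsto_shift) fun n ↦ abs_sub_shift n ▸ abs_sub_le _ (hpos n)
  exact sub_eq_zero.mp (abs_nonpos_iff.mp abs_sub_nonpos)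

theorem intervalIntegrable_rpow_div_one_add_rpow {a c : ℝ} (ha : -1 < a) (hc : 0 ≤ c) :
    IntervalIntegrable (fun u : ℝ ↦ u ^ a / (1 + u ^ c)) volume 0 1 := by
  simp only [div_eq_mul_inv]
  refine (intervalIntegral.intervalIntegrable_rpow' ha).mul_continuousOn
    ((continuousOn_const.add (continuousOn_id.rpow_const fun _ _ ↦ .inr hc)).inv₀ ?_)
  intro u hu
  rw [uIcc_of_le zero_le_one] at hu
  have hu₀ : 0 ≤ u := hu.1
  exact (by positivity : 1 + u ^ c ≠ 0)

theorem integral_rpow_div_one_add_rpow_add_shift {a c : ℝ} (ha : -1 < a) (hc : 0 ≤ c) :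
    (∫ u in (0 : ℝ)..1, u ^ a / (1 + u ^ c)) + ∫ u in (0 : ℝ)..1, u ^ (a + c) / (1 + u ^ c) =
      1 / (a + 1) := by
  rw [← intervalIntegral.integral_add (intervalIntegrable_rpow_div_one_add_rpow ha hc)
    (intervalIntegrable_rpow_div_one_add_rpow (by linarith) hc)]
  calc ∫ u in (0 : ℝ)..1, u ^ a / (1 + u ^ c) + u ^ (a + c) / (1 + u ^ c)
      = ∫ u in (0 : ℝ)..1, u ^ a := by
        refine intervalIntegral.integral_congr_ae (.of_forall fun u hu ↦ ?_)
        rw [uIoc_of_le zero_le_one] at hu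
        have hu₀ : 0 < u := hu.1
        rw [rpow_add hu₀]
        field_simp
    _ = 1 / (a + 1) := by
        rw [integral_rpow (.inl ha), one_rpow, zero_rpow (by linarith), sub_zero]

theorem digamma_add_half_sub_digamma {c x : ℝ} (hc : 0 < c) (hx : 0 < x) :
    digamma (x + 1 / 2) - digamma x =
      2 * c * ∫ u in (0 : ℝ)..1, u ^ (2 * c * x - 1) / (1 + u ^ c) := by
  refine eqOn_Ioi_of_add_shift_eq (f := fun y ↦ digamma (y + 1 / 2) - digamma y)
    (g := fun y ↦ 2 * c * ∫ u in (0 : ℝ)..1, u ^ (2 * c * y - 1) / (1 + u ^ c)) (φ := fun y ↦ 1 / y)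
    one_half_pos (by simpa using tendsto_inv_atTop_zero) ?_ ?_ ?_ ?_ hx <;> intro y hy
  · exact sub_nonneg.mpr (monotoneOn_digamma hy (add_pos hy one_half_pos) (by linarith))
  · refine mul_nonneg (by positivity) (intervalIntegral.integral_nonneg zero_le_one fun u hu ↦ ?_)
    have hu₀ : 0 ≤ u := hu.1
    positivity
  · have recurrence := digamma_add_one (ne_neg_natCast_of_pos hy)
    rw [add_assoc, add_halves]
    linarith
  · have shift := integral_rpow_div_one_add_rpow_add_shift (a := 2 * c * y - 1)
      (by linarith [mul_pos (mul_pos two_pos hc) hy]) hc.le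
    rw [← mul_add, show 2 * c * (y + 1 / 2) - 1 = 2 * c * y - 1 + c by ring, shift]
    field_simp
    ring

theorem digamma_three_fourths :
    digamma (3 / 4) = -eulerMascheroniConstant - 3 * log 2 + π / 2 := by
  have sum : digamma (1 / 4) + digamma (3 / 4) = 2 * digamma (1 / 2) - 2 * log 2 := by
    convert digamma_add_digamma_add_half (x := 1 / 4) (ne_neg_natCast_of_pos (by norm_num)) using 4
      <;> norm_num
  have difference : digamma (3 / 4) - digamma (1 / 4) = 4 * ∫ u in (0 : ℝ)..1, 1 / (1 + u ^ 2) := by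
    convert digamma_add_half_sub_digamma (c := 2) (x := 1 / 4) two_pos (by norm_num) using 4
      <;> norm_num
  rw [integral_one_div_one_add_sq, arctan_one, arctan_zero] at difference
  linarith [digamma_one_half]

theorem hasDerivAt_log_add_arctan {a b : ℝ} (hb : b ≠ 0) (u : ℝ) :
    HasDerivAt (fun u ↦ log ((u - a) ^ 2 + b ^ 2) / 2 + a / b * arctan ((u - a) / b))
      (u / ((u - a) ^ 2 + b ^ 2)) u := by
  have hpos : 0 < (u - a) ^ 2 + b ^ 2 := by positivity
  have hlin : HasDerivAt (fun u ↦ u - a) 1 u := (hasDerivAt_id' u).sub_const a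
  have hlog := (((hlin.fun_pow 2).add_const (b ^ 2)).log hpos.ne').div_const 2
  have harctan := ((hlin.div_const b).arctan).const_mul (a / b)
  refine (hlog.add harctan).congr_deriv ?_
  have hdenom : 1 + ((u - a) / b) ^ 2 = ((u - a) ^ 2 + b ^ 2) / b ^ 2 := by
    field_simp
    ring
  rw [hdenom]
  field_simp
  ring

theorem continuous_div_sub_sq_add_sq (a : ℝ) {b : ℝ} (hb : b ≠ 0) :
    Continuous fun u : ℝ ↦ u / ((u - a) ^ 2 + b ^ 2) :=
  continuous_id.div (by fun_prop) fun u ↦ by positivity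

theorem integral_div_sub_sq_add_sq {a b : ℝ} (hb : b ≠ 0) (p q : ℝ) :
    ∫ u in p..q, u / ((u - a) ^ 2 + b ^ 2) =
      (log ((q - a) ^ 2 + b ^ 2) - log ((p - a) ^ 2 + b ^ 2)) / 2 +
        a / b * (arctan ((q - a) / b) - arctan ((p - a) / b)) := by
  rw [intervalIntegral.integral_eq_sub_of_hasDerivAt (fun u _ ↦ hasDerivAt_log_add_arctan hb u)
    ((continuous_div_sub_sq_add_sq a hb).intervalIntegrable p q)]
  ring

theorem arctan_sqrt_two_sub_one_add_arctan_sqrt_two_add_one :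
    arctan (√2 - 1) + arctan (√2 + 1) = π / 2 := by
  have hinv : √2 - 1 = (√2 + 1)⁻¹ :=
    eq_inv_of_mul_eq_one_left (by linear_combination sq_sqrt (zero_le_two (α := ℝ)))
  rw [hinv, arctan_inv_of_pos (by positivity), sub_add_cancel]

theorem log_two_sub_sqrt_two_sub_log_two_add_sqrt_two :
    log (2 - √2) - log (2 + √2) = -2 * log (1 + √2) := by
  have hlt : 0 < 2 - √2 := sub_pos.mpr (by rw [sqrt_lt' two_pos]; norm_num)
  have hmul : 2 + √2 = (2 - √2) * (1 + √2) ^ 2 := by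
    linear_combination √2 * sq_sqrt (zero_le_two (α := ℝ))
  rw [hmul, log_mul hlt.ne' (by positivity), log_pow]
  push_cast
  ring

-- The complex roots of `1 + u ^ 4` are `±√2 / 2 ± i * √2 / 2`.
theorem sq_div_one_add_pow_four_eq_sub (u : ℝ) :
    u ^ 2 / (1 + u ^ 4) = √2 / 4 * (u / ((u - √2 / 2) ^ 2 + (√2 / 2) ^ 2) -
      u / ((u - -(√2 / 2)) ^ 2 + (√2 / 2) ^ 2)) := by
  have hsq : √2 ^ 2 = 2 := sq_sqrt zero_le_two
  have hpos₁ : 0 < (u - √2 / 2) ^ 2 + (√2 / 2) ^ 2 := by positivity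
  have hpos₂ : 0 < (u - -(√2 / 2)) ^ 2 + (√2 / 2) ^ 2 := by positivity
  have factorization : 1 + u ^ 4 = ((u - √2 / 2) ^ 2 + (√2 / 2) ^ 2) *
      ((u - -(√2 / 2)) ^ 2 + (√2 / 2) ^ 2) := by
    linear_combination (-1 / 4 * √2 ^ 2 - 1 / 2) * hsq
  rw [factorization, div_sub_div _ _ hpos₁.ne' hpos₂.ne', ← mul_div_assoc]
  congr 1
  linear_combination (-1 / 2 * u ^ 2) * hsq

theorem integral_sq_div_one_add_pow_four :
    ∫ u in (0 : ℝ)..1, u ^ 2 / (1 + u ^ 4) = √2 / 4 * (π / 2 - log (1 + √2)) := by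
  have hb : √2 / 2 ≠ 0 := by positivity
  have hsq : √2 ^ 2 = 2 := sq_sqrt zero_le_two
  have integral_pos : ∫ u in (0 : ℝ)..1, u / ((u - √2 / 2) ^ 2 + (√2 / 2) ^ 2) =
      log (2 - √2) / 2 + arctan (√2 - 1) + π / 4 := by
    have h₁ : (1 - √2 / 2) ^ 2 + (√2 / 2) ^ 2 = 2 - √2 := by linear_combination hsq / 2
    have h₀ : (0 - √2 / 2) ^ 2 + (√2 / 2) ^ 2 = 1 := by linear_combination hsq / 2
    have harg : (1 - √2 / 2) / (√2 / 2) = √2 - 1 := by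
      field_simp
      linear_combination -hsq
    rw [integral_div_sub_sq_add_sq hb, h₁, h₀, harg, zero_sub, neg_div, div_self hb, arctan_neg,
      arctan_one, log_one]
    ring
  have integral_neg : ∫ u in (0 : ℝ)..1, u / ((u - -(√2 / 2)) ^ 2 + (√2 / 2) ^ 2) =
      log (2 + √2) / 2 - arctan (√2 + 1) + π / 4 := by
    have h₁ : (1 - -(√2 / 2)) ^ 2 + (√2 / 2) ^ 2 = 2 + √2 := by linear_combination hsq / 2
    have h₀ : (0 - -(√2 / 2)) ^ 2 + (√2 / 2) ^ 2 = 1 := by linear_combination hsq / 2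
    have harg : (1 - -(√2 / 2)) / (√2 / 2) = √2 + 1 := by
      field_simp
      linear_combination -hsq
    rw [integral_div_sub_sq_add_sq hb, h₁, h₀, harg, zero_sub, neg_neg, neg_div, div_self hb,
      arctan_one, log_one]
    ring
  simp only [sq_div_one_add_pow_four_eq_sub]
  rw [intervalIntegral.integral_const_mul, intervalIntegral.integral_sub
    ((continuous_div_sub_sq_add_sq _ hb).intervalIntegrable 0 1)
    ((continuous_div_sub_sq_add_sq _ hb).intervalIntegrable 0 1), integral_pos, integral_neg]
  linear_combination √2 / 8 * log_two_sub_sqrt_two_sub_log_two_add_sqrt_two +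
    √2 / 4 * arctan_sqrt_two_sub_one_add_arctan_sqrt_two_add_one

theorem digamma_three_eighths :
    digamma (3 / 8) = -eulerMascheroniConstant - (√2 - 1) * (π / 2) - 4 * log 2
      + √2 * log (1 + √2) := by
  have sum : digamma (3 / 8) + digamma (7 / 8) = 2 * digamma (3 / 4) - 2 * log 2 := by
    convert digamma_add_digamma_add_half (x := 3 / 8) (ne_neg_natCast_of_pos (by norm_num)) using 4
      <;> norm_num
  have difference : digamma (7 / 8) - digamma (3 / 8) =
      8 * ∫ u in (0 : ℝ)..1, u ^ 2 / (1 + u ^ 4) := by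
    convert digamma_add_half_sub_digamma (c := 4) (x := 3 / 8) four_pos (by norm_num) using 4
      <;> norm_num
  rw [integral_sq_div_one_add_pow_four] at difference
  linarith [digamma_three_fourths]

theorem digamma_neg_five_eighths :
    digamma (-(5 / 8)) =
      -Real.eulerMascheroniConstant + 8 / 5 - (Real.sqrt 2 - 1) * (Real.pi / 2)
        - 4 * Real.log 2 + Real.sqrt 2 * Real.log (1 + Real.sqrt 2) := by
  have not_pole (m : ℕ) : -(5 / 8 : ℝ) ≠ -m := fun h ↦ by
    have : 5 = 8 * m := by exact_mod_cast (by linarith : (5 : ℝ) = 8 * m)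
    omega
  have recurrence := digamma_add_one not_pole
  rw [show -(5 / 8 : ℝ) + 1 = 3 / 8 by norm_num, digamma_three_eighths,
    show 1 / -(5 / 8 : ℝ) = -(8 / 5) by norm_num] at recurrence
  linarith
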